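/- Let a, b > 0, θ ∈ (0,1), and f ∈ 𝒮(ℝⁿ). Then ‖J^{θa}(⟨x⟩^{(1-θ)b} f)‖_{L²} ≤ C ‖⟨x⟩^{b} f‖_{L²}^{1-θ} ‖J^{a} f‖_{L²}^{θ}, where J^s denotes the Bessel potential of order s, i.e., the Fourier multiplier (1+|ξ|²)^{s/2}, and ⟨x⟩ = (1+|x|²)^{1/2}. -/

import Mathlib

open scoped FourierTransform ENNReal
open MeasureTheory

/-- The Bessel potential J^s, i.e. the Fourier multiplier (1+|ξ|²)^{s/2}. -/
noncomputable def Jpot {n : ℕ} (s : ℝ) (f : EuclideanSpace ℝ (Fin n) → ℂ) :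
    EuclideanSpace ℝ (Fin n) → ℂ :=
  𝓕⁻ (fun ξ => ((1 + ‖ξ‖ ^ 2) ^ (s / 2) : ℝ) • 𝓕 f ξ)

/-!
By Plancherel, the matrix coefficients of `T_z f = J^{za}(⟨x⟩^{(1-z)b} f)` are entire in `z` and
bounded on vertical strips, so the three lines theorem reduces the inequality to bounds for `T_z`
on the lines `Re z = 0`, where `J^{za}` is unitary and `|⟨x⟩^{(1-z)b}| = ⟨x⟩^b`, and `Re z = 1`.
On the second line one needs that multiplication by `⟨x⟩^{iτ}` is bounded on `H^a` with a norm of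
polynomial growth in `τ`, which the factor `exp (z ^ 2)` absorbs. For integers `a` this follows by
induction from the commutator of `∂_v` with `⟨x⟩^{iτ}`, which is `iτ` times multiplication by
`∂_v log ⟨x⟩`. The remaining `a` follow by real interpolation, since on the Fourier side the
`K`-functional of `(L², H¹)` is explicit and its weighted integral over the parameter gives back
the norm of `H^θ`.
-/

open LineDeriv
open scoped SchwartzMap InnerProductSpace

section BracketPow

variable {E : Type*} [NormedAddCommGroup E]

/-- The complex power `⟨x⟩ ^ w` of the Japanese bracket `⟨x⟩ = (1 + ‖x‖ ^ 2) ^ (1 / 2)`. -/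
noncomputable def bracketPow (w : ℂ) (x : E) : ℂ :=
  ((1 + ‖x‖ ^ 2 : ℝ) : ℂ) ^ (w / 2)

lemma one_add_norm_sq_pos (x : E) : 0 < 1 + ‖x‖ ^ 2 := by positivity

lemma bracketPow_ofReal (r : ℝ) (x : E) :
    bracketPow r x = ((1 + ‖x‖ ^ 2) ^ (r / 2) : ℝ) := by
  rw [bracketPow, Complex.ofReal_cpow (one_add_norm_sq_pos x).le]
  push_cast
  rfl

@[simp]
lemma norm_bracketPow (w : ℂ) (x : E) : ‖bracketPow w x‖ = (1 + ‖x‖ ^ 2) ^ (w.re / 2) := by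
  rw [bracketPow, Complex.norm_cpow_eq_rpow_re_of_pos (one_add_norm_sq_pos x)]
  simp

@[simp]
lemma bracketPow_zero : bracketPow (0 : ℂ) = fun _ : E => (1 : ℂ) := by
  ext x
  simp [bracketPow]

lemma bracketPow_add (w w' : ℂ) (x : E) :
    bracketPow (w + w') x = bracketPow w x * bracketPow w' x := by
  rw [bracketPow, add_div, Complex.cpow_add _ _ (by exact_mod_cast (one_add_norm_sq_pos x).ne')]
  rfl

lemma bracketPow_eq_exp (w : ℂ) (x : E) :
    bracketPow w x = Complex.exp (w * (Real.log (1 + ‖x‖ ^ 2) / 2 : ℝ)) := by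
  rw [bracketPow, Complex.cpow_def_of_ne_zero (by exact_mod_cast (one_add_norm_sq_pos x).ne'),
    ← Complex.ofReal_log (one_add_norm_sq_pos x).le]
  congr 1
  push_cast
  ring

lemma bracketPow_neg_two (x : E) : bracketPow (-2) x = ((1 + ‖x‖ ^ 2)⁻¹ : ℝ) := by
  have h := bracketPow_ofReal (-2) x
  norm_num [Real.rpow_neg_one] at h
  simpa using h

variable [InnerProductSpace ℝ E]

lemma hasFDerivAt_log_one_add_norm_sq (x : E) :
    HasFDerivAt (fun x : E => Real.log (1 + ‖x‖ ^ 2))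
      ((1 + ‖x‖ ^ 2)⁻¹ • (2 : ℝ) • innerSL ℝ x) x := by
  have h : HasFDerivAt (fun x : E => 1 + ‖x‖ ^ 2) (2 • innerSL ℝ x) x :=
    (hasStrictFDerivAt_norm_sq x).hasFDerivAt.const_add 1
  rw [← Nat.cast_smul_eq_nsmul ℝ, Nat.cast_ofNat] at h
  exact h.log (one_add_norm_sq_pos x).ne'

lemma hasTemperateGrowth_log_one_add_norm_sq :
    (fun x : E => Real.log (1 + ‖x‖ ^ 2)).HasTemperateGrowth := by
  refine Function.HasTemperateGrowth.of_fderiv (k := 2) (C := 1) ?_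
    (fun x => (hasFDerivAt_log_one_add_norm_sq x).differentiableAt) fun x => ?_
  · have h_fderiv : fderiv ℝ (fun x : E => Real.log (1 + ‖x‖ ^ 2)) =
        fun x => (1 + ‖x‖ ^ 2)⁻¹ • (2 : ℝ) • innerSL ℝ x :=
      funext fun x => (hasFDerivAt_log_one_add_norm_sq x).fderiv
    rw [h_fderiv]
    have h_inv : (fun x : E => (1 + ‖x‖ ^ 2)⁻¹).HasTemperateGrowth := by
      simpa [Real.rpow_neg_one] using Function.hasTemperateGrowth_one_add_norm_sq_rpow E (-1)
    exact h_inv.smul ((2 : ℝ) • innerSL ℝ (E := E)).hasTemperateGrowth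
  · rw [Real.norm_of_nonneg (Real.log_nonneg (by simp))]
    have := Real.log_le_sub_one_of_pos (one_add_norm_sq_pos x)
    nlinarith [norm_nonneg x]

lemma hasTemperateGrowth_cexp_mul_I (τ : ℝ) :
    (fun t : ℝ => Complex.exp (τ * Complex.I * t)).HasTemperateGrowth := by
  have hd (n : ℕ) : iteratedDeriv n (fun t : ℝ => Complex.exp (τ * Complex.I * t)) =
      fun t : ℝ => (τ * Complex.I) ^ n * Complex.exp (τ * Complex.I * t) := by
    induction n with
    | zero => simp
    | succ n ih =>
      rw [iteratedDeriv_succ, ih]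
      ext t
      have h : HasDerivAt (fun t : ℝ => (τ * Complex.I) * (t : ℂ)) (τ * Complex.I) t := by
        simpa using (Complex.ofRealCLM.hasDerivAt (x := t)).const_mul (τ * Complex.I)
      rw [(h.cexp.const_mul _).deriv]
      ring
  refine ⟨(contDiff_const.mul Complex.ofRealCLM.contDiff).cexp, fun n => ⟨0, |τ| ^ n, fun t => ?_⟩⟩
  rw [norm_iteratedFDeriv_eq_norm_iteratedDeriv, hd]
  simp [Complex.norm_exp]

@[fun_prop]
lemma hasTemperateGrowth_bracketPow (w : ℂ) : (bracketPow (E := E) w).HasTemperateGrowth := by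
  have h_re : (fun x : E => bracketPow (w.re : ℂ) x).HasTemperateGrowth := by
    simp_rw [bracketPow_ofReal]
    exact Function.Complex.hasTemperateGrowth_ofReal.comp
      (Function.hasTemperateGrowth_one_add_norm_sq_rpow E (w.re / 2))
  have h_im : (fun x : E => bracketPow (w.im * Complex.I) x).HasTemperateGrowth := by
    convert (hasTemperateGrowth_cexp_mul_I (w.im / 2)).comp
      (hasTemperateGrowth_log_one_add_norm_sq (E := E)) using 2 with x
    rw [bracketPow_eq_exp, Function.comp_apply]
    congr 1
    push_cast
    ring
  have h_mul : bracketPow w = fun x : E =>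
      bracketPow (w.re : ℂ) x * bracketPow (w.im * Complex.I) x := by
    ext x
    rw [← bracketPow_add, Complex.re_add_im]
  rw [h_mul]
  exact h_re.mul h_im

/-- The directional derivative `⟪v, x⟫ / ⟨x⟩ ^ 2` of `log ⟨x⟩` along `v`, as a complex number. -/
noncomputable def logDerivBracket (v x : E) : ℂ :=
  (⟪v, x⟫_ℝ : ℂ) * bracketPow (-2) x

@[fun_prop]
lemma hasTemperateGrowth_logDerivBracket (v : E) : (logDerivBracket v).HasTemperateGrowth :=
  (Function.Complex.hasTemperateGrowth_ofReal.comp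
    (Function.hasTemperateGrowth_inner_right v)).mul (hasTemperateGrowth_bracketPow (-2))

lemma norm_logDerivBracket_le (v x : E) : ‖logDerivBracket v x‖ ≤ ‖v‖ := by
  rw [logDerivBracket, norm_mul, bracketPow_neg_two, Complex.norm_real, Complex.norm_real,
    norm_inv, Real.norm_of_nonneg (one_add_norm_sq_pos x).le, ← div_eq_mul_inv,
    div_le_iff₀ (one_add_norm_sq_pos x)]
  refine (norm_inner_le_norm v x).trans ?_
  gcongr
  nlinarith [sq_nonneg (‖x‖ - 1)]

lemma fderiv_bracketPow_apply (w : ℂ) (x v : E) :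
    fderiv ℝ (bracketPow w) x v = w * logDerivBracket v x * bracketPow w x := by
  have h_log := Complex.ofRealCLM.hasFDerivAt.comp x
    ((hasFDerivAt_log_one_add_norm_sq x).mul_const (2 : ℝ)⁻¹)
  have h : HasFDerivAt (bracketPow w) _ x :=
    (h_log.const_mul w).cexp.congr_of_eventuallyEq (.of_forall fun y => by
      simp [bracketPow_eq_exp, div_eq_mul_inv])
  rw [h.fderiv]
  simp [bracketPow_eq_exp w x, logDerivBracket, bracketPow_neg_two, real_inner_comm]
  ring_nf

lemma fderiv_logDerivBracket_apply (v x w : E) :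
    fderiv ℝ (logDerivBracket v) x w =
      (⟪v, w⟫_ℝ : ℂ) * bracketPow (-2) x - 2 * (logDerivBracket v x * logDerivBracket w x) := by
  have h_inner : HasFDerivAt (fun x => (⟪v, x⟫_ℝ : ℂ)) (Complex.ofRealCLM ∘L innerSL ℝ v) x :=
    (Complex.ofRealCLM ∘L innerSL ℝ v).hasFDerivAt
  have h_pow := (hasTemperateGrowth_bracketPow (E := E) (-2)).1.differentiable (by simp) x
  have h : HasFDerivAt (logDerivBracket v) _ x := h_inner.mul h_pow.hasFDerivAt
  simp only [h.fderiv, add_apply, smul_apply, fderiv_bracketPow_apply, logDerivBracket,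
    ContinuousLinearMap.comp_apply, innerSL_apply_apply, Complex.ofRealCLM_apply, smul_eq_mul]
  ring

end BracketPow

variable {E F : Type*} [NormedAddCommGroup E] [InnerProductSpace ℝ E] [FiniteDimensional ℝ E]
  [MeasurableSpace E] [BorelSpace E] [NormedAddCommGroup F] [InnerProductSpace ℂ F]

section SobolevNorm

/-- The Bessel potential `J ^ w` of complex order, i.e. the Fourier multiplier with symbol
`⟨ξ⟩ ^ w`, as an operator on Schwartz functions. -/
noncomputable def besselPot (w : ℂ) : 𝓢(E, F) →L[ℂ] 𝓢(E, F) :=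
  SchwartzMap.fourierMultiplierCLM F (bracketPow w)

/-- The norm `‖J ^ a f‖` in `L ^ 2` of a Schwartz function, i.e. its `H ^ a` norm. -/
noncomputable def sobolevNorm (a : ℝ) (f : 𝓢(E, F)) : ℝ :=
  ‖(besselPot a f).toLp 2‖

lemma sobolevNorm_nonneg (a : ℝ) (f : 𝓢(E, F)) : 0 ≤ sobolevNorm a f :=
  norm_nonneg _

lemma sobolevNorm_add_le (a : ℝ) (f g : 𝓢(E, F)) :
    sobolevNorm a (f + g) ≤ sobolevNorm a f + sobolevNorm a g := by
  simp only [sobolevNorm, ← SchwartzMap.toLpCLM_apply (𝕜 := ℂ), map_add]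
  exact norm_add_le _ _

lemma sobolevNorm_smul (a : ℝ) (c : ℂ) (f : 𝓢(E, F)) :
    sobolevNorm a (c • f) = ‖c‖ * sobolevNorm a f := by
  simp only [sobolevNorm, ← SchwartzMap.toLpCLM_apply (𝕜 := ℂ), map_smul, norm_smul]

lemma sobolevNorm_sum_le {ι : Type*} (s : Finset ι) (a : ℝ) (f : ι → 𝓢(E, F)) :
    sobolevNorm a (∑ i ∈ s, f i) ≤ ∑ i ∈ s, sobolevNorm a (f i) :=
  Finset.le_sum_of_subadditive _
    (by simpa using (sobolevNorm_smul a 0 (0 : 𝓢(E, F))).le) (sobolevNorm_add_le a) s f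

lemma norm_toLp_two_le {f g : 𝓢(E, F)} {C : ℝ} (h : ∀ x, ‖f x‖ ≤ C * ‖g x‖) :
    ‖f.toLp 2‖ ≤ C * ‖g.toLp 2‖ := by
  refine Lp.norm_le_mul_norm_of_ae_le_mul ?_
  filter_upwards [f.coeFn_toLp 2, g.coeFn_toLp 2] with x hf hg
  rw [hf, hg]
  exact h x

lemma fourier_lineDeriv_apply (v : E) (f : 𝓢(E, F)) (ξ : E) :
    𝓕 (∂_{v} f) ξ = (2 * Real.pi * Complex.I * ⟪ξ, v⟫_ℝ : ℂ) • 𝓕 f ξ := by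
  rw [SchwartzMap.fourier_lineDerivOp_eq, smul_apply, SchwartzMap.smulLeftCLM_apply_apply
    (Function.hasTemperateGrowth_inner_left v), mul_smul, mul_smul, mul_smul, mul_smul,
    Complex.coe_smul, Complex.coe_smul]
  simp [mul_smul]

variable [CompleteSpace F]

lemma fourier_besselPot_apply (w : ℂ) (f : 𝓢(E, F)) (ξ : E) :
    𝓕 (besselPot w f) ξ = bracketPow w ξ • 𝓕 f ξ := by
  rw [besselPot, SchwartzMap.fourierMultiplierCLM_apply, FourierTransform.fourier_fourierInv_eq,
    SchwartzMap.smulLeftCLM_apply_apply (hasTemperateGrowth_bracketPow w)]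

lemma besselPot_besselPot (w w' : ℂ) (f : 𝓢(E, F)) :
    besselPot w (besselPot w' f) = besselPot (w + w') f := by
  rw [besselPot, besselPot, besselPot, SchwartzMap.fourierMultiplierCLM_fourierMultiplierCLM_apply
    (hasTemperateGrowth_bracketPow w) (hasTemperateGrowth_bracketPow w')]
  congr 2 with x
  rw [Pi.mul_apply, bracketPow_add]

@[simp]
lemma besselPot_zero (f : 𝓢(E, F)) : besselPot 0 f = f := by
  simp [besselPot]

lemma sobolevNorm_zero (f : 𝓢(E, F)) : sobolevNorm 0 f = ‖f.toLp 2‖ := by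
  simp [sobolevNorm]

lemma norm_toLp_two_le_of_norm_fourier_le {f g : 𝓢(E, F)} {C : ℝ}
    (h : ∀ ξ, ‖𝓕 f ξ‖ ≤ C * ‖𝓕 g ξ‖) : ‖f.toLp 2‖ ≤ C * ‖g.toLp 2‖ := by
  rw [← SchwartzMap.norm_fourier_toL2_eq f, ← SchwartzMap.norm_fourier_toL2_eq g]
  exact norm_toLp_two_le h

lemma norm_toLp_besselPot (w : ℂ) (f : 𝓢(E, F)) :
    ‖(besselPot w f).toLp 2‖ = sobolevNorm w.re f := by
  have h_le {w w' : ℂ} (hw : w.re = w'.re) :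
      ‖(besselPot w f).toLp 2‖ ≤ ‖(besselPot w' f).toLp 2‖ := by
    rw [← one_mul (norm (SchwartzMap.toLp (besselPot w' f) _ _))]
    refine norm_toLp_two_le_of_norm_fourier_le fun ξ => ?_
    simp [fourier_besselPot_apply, norm_smul, hw]
  exact le_antisymm (h_le (by simp)) (h_le (by simp))

lemma sobolevNorm_mono {a a' : ℝ} (h : a ≤ a') (f : 𝓢(E, F)) :
    sobolevNorm a f ≤ sobolevNorm a' f := by
  rw [← one_mul (sobolevNorm a' f)]
  refine norm_toLp_two_le_of_norm_fourier_le fun ξ => ?_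
  simp only [fourier_besselPot_apply, norm_smul, norm_bracketPow, Complex.ofReal_re, one_mul]
  gcongr
  simp

lemma sobolevNorm_lineDeriv_le (a : ℝ) (v : E) (f : 𝓢(E, F)) :
    sobolevNorm a (∂_{v} f) ≤ 2 * Real.pi * ‖v‖ * sobolevNorm (a + 1) f := by
  refine norm_toLp_two_le_of_norm_fourier_le fun ξ => ?_
  have h_inner : |⟪ξ, v⟫_ℝ| ≤ ‖v‖ * (1 + ‖ξ‖ ^ 2) ^ (1 / 2 : ℝ) := by
    rw [mul_comm, ← Real.sqrt_eq_rpow]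
    refine (abs_real_inner_le_norm ξ v).trans ?_
    gcongr
    exact Real.le_sqrt_of_sq_le (by simp)
  have h_pow : (1 + ‖ξ‖ ^ 2) ^ ((a + 1) / 2) =
      (1 + ‖ξ‖ ^ 2) ^ (a / 2) * (1 + ‖ξ‖ ^ 2) ^ (1 / 2 : ℝ) := by
    rw [← Real.rpow_add (one_add_norm_sq_pos ξ), add_div]
  simp only [fourier_besselPot_apply, fourier_lineDeriv_apply, norm_smul, norm_mul,
    norm_bracketPow, Complex.ofReal_re, Complex.norm_real, Complex.norm_I, Complex.norm_ofNat,
    Real.norm_of_nonneg Real.pi_pos.le, Real.norm_eq_abs, mul_one, h_pow]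
  calc (1 + ‖ξ‖ ^ 2) ^ (a / 2) * (2 * Real.pi * |⟪ξ, v⟫_ℝ| * ‖𝓕 f ξ‖)
      ≤ (1 + ‖ξ‖ ^ 2) ^ (a / 2) *
        (2 * Real.pi * (‖v‖ * (1 + ‖ξ‖ ^ 2) ^ (1 / 2 : ℝ)) * ‖𝓕 f ξ‖) := by gcongr
    _ = _ := by ring

lemma besselPot_two (f : 𝓢(E, F)) :
    besselPot 2 f = f + ∑ i, (-((2 * (Real.pi : ℂ)) ^ 2)⁻¹) •
      ∂_{stdOrthonormalBasis ℝ E i} (∂_{stdOrthonormalBasis ℝ E i} f) := by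
  refine (FourierTransform.fourierCLE ℂ 𝓢(E, F)).injective ?_
  ext ξ
  have h_norm : (‖ξ‖ ^ 2 : ℂ) = ∑ i, (⟪ξ, stdOrthonormalBasis ℝ E i⟫_ℝ : ℂ) ^ 2 := by
    exact_mod_cast ((stdOrthonormalBasis ℝ E).sum_sq_inner_left ξ).symm
  have h_pow : bracketPow 2 ξ = 1 + (‖ξ‖ ^ 2 : ℂ) := by
    simp [bracketPow]
  have hpi : (Real.pi : ℂ) ≠ 0 := by simp [Real.pi_ne_zero]
  simp only [map_add, map_sum, map_smul, FourierTransform.fourierCLE_apply,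
    fourier_besselPot_apply, fourier_lineDeriv_apply, add_apply, smul_apply, sum_apply, h_pow,
    h_norm, smul_smul, ← Finset.sum_smul, add_smul, one_smul]
  congr! 3 with i
  field_simp
  simp

lemma sobolevNorm_add_one_le (a : ℝ) (f : 𝓢(E, F)) :
    sobolevNorm (a + 1) f ≤
      sobolevNorm a f + ∑ i, sobolevNorm a (∂_{stdOrthonormalBasis ℝ E i} f) := by
  have h_exponent : ((a - 1 : ℝ) : ℂ) + 2 = ((a + 1 : ℝ) : ℂ) := by push_cast; ring
  have h_split : sobolevNorm (a + 1) f = sobolevNorm (a - 1) (besselPot 2 f) := by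
    rw [sobolevNorm, sobolevNorm, besselPot_besselPot, h_exponent]
  rw [h_split, besselPot_two]
  refine (sobolevNorm_add_le _ _ _).trans (add_le_add (sobolevNorm_mono (by linarith) f) ?_)
  refine (sobolevNorm_sum_le _ _ _).trans (Finset.sum_le_sum fun i _ => ?_)
  have h_deriv : sobolevNorm (a - 1)
      (∂_{stdOrthonormalBasis ℝ E i} (∂_{stdOrthonormalBasis ℝ E i} f)) ≤
      2 * Real.pi * sobolevNorm a (∂_{stdOrthonormalBasis ℝ E i} f) := by
    simpa using sobolevNorm_lineDeriv_le (a - 1) (stdOrthonormalBasis ℝ E i)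
      (∂_{stdOrthonormalBasis ℝ E i} f)
  have h_norm : ‖(-((2 * (Real.pi : ℂ)) ^ 2)⁻¹)‖ = ((2 * Real.pi) ^ 2)⁻¹ := by
    simp [Real.pi_pos.le]
  rw [sobolevNorm_smul, h_norm]
  calc ((2 * Real.pi) ^ 2)⁻¹ * sobolevNorm (a - 1)
        (∂_{stdOrthonormalBasis ℝ E i} (∂_{stdOrthonormalBasis ℝ E i} f))
      ≤ ((2 * Real.pi) ^ 2)⁻¹ *
        (2 * Real.pi * sobolevNorm a (∂_{stdOrthonormalBasis ℝ E i} f)) := by gcongr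
    _ = (2 * Real.pi)⁻¹ * sobolevNorm a (∂_{stdOrthonormalBasis ℝ E i} f) := by
      field_simp
    _ ≤ sobolevNorm a (∂_{stdOrthonormalBasis ℝ E i} f) :=
      mul_le_of_le_one_left (sobolevNorm_nonneg _ _)
        (inv_le_one_of_one_le₀ (by linarith [Real.pi_gt_three]))

end SobolevNorm

section SobolevBounded

/-- The operator `T` maps `H ^ a` to itself with norm at most `C`. -/
def SobolevBounded (a C : ℝ) (T : 𝓢(E, F) →L[ℂ] 𝓢(E, F)) : Prop :=
  ∀ f, sobolevNorm a (T f) ≤ C * sobolevNorm a f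

namespace SobolevBounded

variable {a C C' : ℝ} {S T : 𝓢(E, F) →L[ℂ] 𝓢(E, F)}

lemma mono (hT : SobolevBounded a C T) (h : C ≤ C') : SobolevBounded a C' T := fun f =>
  (hT f).trans (mul_le_mul_of_nonneg_right h (sobolevNorm_nonneg a f))

lemma comp (hS : SobolevBounded a C S) (hT : SobolevBounded a C' T) (hC : 0 ≤ C) :
    SobolevBounded a (C * C') (S ∘L T) := fun f =>
  calc sobolevNorm a (S (T f)) ≤ C * sobolevNorm a (T f) := hS (T f)
    _ ≤ C * (C' * sobolevNorm a f) := mul_le_mul_of_nonneg_left (hT f) hC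
    _ = C * C' * sobolevNorm a f := (mul_assoc _ _ _).symm

lemma add (hS : SobolevBounded a C S) (hT : SobolevBounded a C' T) :
    SobolevBounded a (C + C') (S + T) := fun f =>
  (sobolevNorm_add_le a (S f) (T f)).trans
    ((add_le_add (hS f) (hT f)).trans_eq (add_mul _ _ _).symm)

lemma smul (hT : SobolevBounded a C T) (c : ℂ) : SobolevBounded a (‖c‖ * C) (c • T) := fun f => by
  rw [smul_apply, sobolevNorm_smul, mul_assoc]
  exact mul_le_mul_of_nonneg_left (hT f) (norm_nonneg c)

variable [CompleteSpace F]

-- Estimate `‖∂ᵢ (T f)‖_a` by moving the derivative past `T`.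
lemma add_one (hT : SobolevBounded a C T) (hC : 0 ≤ C) (hC' : 0 ≤ C')
    (h_comm : ∀ v : E, ‖v‖ = 1 → SobolevBounded a C' ⁅lineDerivOpCLM ℂ 𝓢(E, F) v, T⁆) :
    SobolevBounded (a + 1) (C + Module.finrank ℝ E * (C' + 2 * Real.pi * C)) T := by
  intro f
  have hf_mono : sobolevNorm a f ≤ sobolevNorm (a + 1) f := sobolevNorm_mono (by linarith) f
  have h_deriv (v : E) (hv : ‖v‖ = 1) :
      sobolevNorm a (∂_{v} (T f)) ≤ (C' + 2 * Real.pi * C) * sobolevNorm (a + 1) f := by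
    have h_eq : ∂_{v} (T f) = ⁅lineDerivOpCLM ℂ 𝓢(E, F) v, T⁆ f + T (∂_{v} f) := by
      simp [Ring.lie_def]
    calc sobolevNorm a (∂_{v} (T f))
        ≤ C' * sobolevNorm a f + C * sobolevNorm a (∂_{v} f) := by
          rw [h_eq]
          exact (sobolevNorm_add_le _ _ _).trans (add_le_add (h_comm v hv f) (hT _))
      _ ≤ C' * sobolevNorm (a + 1) f + C * (2 * Real.pi * ‖v‖ * sobolevNorm (a + 1) f) := by
          gcongr
          exact sobolevNorm_lineDeriv_le a v f
      _ = (C' + 2 * Real.pi * C) * sobolevNorm (a + 1) f := by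
          rw [hv]
          ring
  calc sobolevNorm (a + 1) (T f)
      ≤ sobolevNorm a (T f) + ∑ i, sobolevNorm a (∂_{stdOrthonormalBasis ℝ E i} (T f)) :=
        sobolevNorm_add_one_le a (T f)
    _ ≤ C * sobolevNorm (a + 1) f +
        ∑ _i : Fin (Module.finrank ℝ E), (C' + 2 * Real.pi * C) * sobolevNorm (a + 1) f := by
        refine add_le_add ((hT f).trans (by gcongr)) (Finset.sum_le_sum fun i _ => ?_)
        exact h_deriv _ ((stdOrthonormalBasis ℝ E).norm_eq_one i)
    _ = (C + Module.finrank ℝ E * (C' + 2 * Real.pi * C)) * sobolevNorm (a + 1) f := by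
        rw [Finset.sum_const, Finset.card_univ, Fintype.card_fin, nsmul_eq_mul]
        ring

end SobolevBounded

omit [FiniteDimensional ℝ E] [MeasurableSpace E] [BorelSpace E] in
lemma lie_lineDeriv_smulLeftCLM_apply {u : E → ℂ} (hu : u.HasTemperateGrowth) (v : E)
    (f : 𝓢(E, F)) (x : E) :
    ⁅lineDerivOpCLM ℂ 𝓢(E, F) v, SchwartzMap.smulLeftCLM F u⁆ f x = fderiv ℝ u x v • f x := by
  have h : HasFDerivAt (SchwartzMap.smulLeftCLM F u f) _ x :=
    ((hu.1.differentiable (by simp) x).hasFDerivAt.smul (f.hasFDerivAt x)).congr_of_eventuallyEq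
      (.of_forall fun y => SchwartzMap.smulLeftCLM_apply_apply hu f y)
  simp [Ring.lie_def, SchwartzMap.lineDerivOp_apply_eq_fderiv, h.fderiv,
    SchwartzMap.smulLeftCLM_apply_apply hu]

/-- Multiplication by `⟨x⟩ ^ w`, as an operator on Schwartz functions. -/
noncomputable def bracketMul (w : ℂ) : 𝓢(E, F) →L[ℂ] 𝓢(E, F) :=
  SchwartzMap.smulLeftCLM F (bracketPow w)

/-- Multiplication by the derivative of `log ⟨x⟩` along `v`, as an operator on Schwartz
functions. -/
noncomputable def logDerivBracketMul (v : E) : 𝓢(E, F) →L[ℂ] 𝓢(E, F) :=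
  SchwartzMap.smulLeftCLM F (logDerivBracket v)

section Commutators

omit [FiniteDimensional ℝ E] [MeasurableSpace E] [BorelSpace E]

lemma bracketMul_apply (w : ℂ) (f : 𝓢(E, F)) (x : E) :
    bracketMul w f x = bracketPow w x • f x :=
  SchwartzMap.smulLeftCLM_apply_apply (hasTemperateGrowth_bracketPow w) f x

lemma logDerivBracketMul_apply (v : E) (f : 𝓢(E, F)) (x : E) :
    logDerivBracketMul v f x = logDerivBracket v x • f x :=
  SchwartzMap.smulLeftCLM_apply_apply (hasTemperateGrowth_logDerivBracket v) f x

lemma lie_lineDeriv_bracketMul (v : E) (w : ℂ) :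
    ⁅lineDerivOpCLM ℂ 𝓢(E, F) v, bracketMul (F := F) w⁆ =
      w • (logDerivBracketMul v ∘L bracketMul w) := by
  ext f x
  rw [bracketMul, lie_lineDeriv_smulLeftCLM_apply (hasTemperateGrowth_bracketPow w),
    fderiv_bracketPow_apply, ← bracketMul]
  simp only [smul_apply, ContinuousLinearMap.comp_apply, logDerivBracketMul_apply,
    bracketMul_apply, mul_smul]

lemma lie_lineDeriv_logDerivBracketMul (v w : E) :
    ⁅lineDerivOpCLM ℂ 𝓢(E, F) w, logDerivBracketMul (F := F) v⁆ =
      (⟪v, w⟫_ℝ : ℂ) • bracketMul (-2) +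
        (-2 : ℂ) • (logDerivBracketMul v ∘L logDerivBracketMul w) := by
  ext f x
  rw [logDerivBracketMul, lie_lineDeriv_smulLeftCLM_apply (hasTemperateGrowth_logDerivBracket v),
    fderiv_logDerivBracket_apply, ← logDerivBracketMul]
  simp only [add_apply, smul_apply, ContinuousLinearMap.comp_apply, logDerivBracketMul_apply,
    bracketMul_apply, smul_smul, ← add_smul]
  congr 1
  ring

end Commutators

variable [CompleteSpace F]

lemma sobolevBounded_zero_smulLeftCLM {u : E → ℂ} (hu : u.HasTemperateGrowth) {C : ℝ}
    (h : ∀ x, ‖u x‖ ≤ C) : SobolevBounded 0 C (SchwartzMap.smulLeftCLM (E := E) F u) := fun f => by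
  rw [sobolevNorm_zero, sobolevNorm_zero]
  refine norm_toLp_two_le fun x => ?_
  rw [SchwartzMap.smulLeftCLM_apply_apply hu, norm_smul]
  exact mul_le_mul_of_nonneg_right (h x) (norm_nonneg _)

lemma exists_sobolevBounded_bracketMul_neg_two_and_logDerivBracketMul (k : ℕ) :
    ∃ C, 0 ≤ C ∧ SobolevBounded k C (bracketMul (E := E) (F := F) (-2)) ∧
      ∀ v : E, ‖v‖ = 1 → SobolevBounded k C (logDerivBracketMul (F := F) v) := by
  induction k with
  | zero =>
    rw [Nat.cast_zero]
    refine ⟨1, zero_le_one, sobolevBounded_zero_smulLeftCLM (hasTemperateGrowth_bracketPow _)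
      fun x => ?_, fun v hv => sobolevBounded_zero_smulLeftCLM
      (hasTemperateGrowth_logDerivBracket v) fun x => hv ▸ norm_logDerivBracket_le v x⟩
    rw [norm_bracketPow]
    exact Real.rpow_le_one_of_one_le_of_nonpos (by simp) (by simp)
  | succ k ih =>
    obtain ⟨C, hC, h_pow, h_log⟩ := ih
    have h_lie_pow (v : E) (hv : ‖v‖ = 1) : SobolevBounded k (2 * (C * C) + C)
        ⁅lineDerivOpCLM ℂ 𝓢(E, F) v, bracketMul (E := E) (F := F) (-2)⁆ := by
      rw [lie_lineDeriv_bracketMul]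
      refine (((h_log v hv).comp h_pow hC).smul _).mono ?_
      simpa using hC
    have h_lie_log (v w : E) (hv : ‖v‖ = 1) (hw : ‖w‖ = 1) : SobolevBounded k (2 * (C * C) + C)
        ⁅lineDerivOpCLM ℂ 𝓢(E, F) w, logDerivBracketMul (F := F) v⁆ := by
      have h_inner : ‖(⟪v, w⟫_ℝ : ℂ)‖ ≤ 1 := by
        simpa [hv, hw] using norm_inner_le_norm (𝕜 := ℝ) v w
      rw [lie_lineDeriv_logDerivBracketMul]
      refine ((h_pow.smul _).add (((h_log v hv).comp (h_log w hw) hC).smul _)).mono ?_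
      rw [norm_neg, Complex.norm_ofNat, add_comm]
      gcongr
      exact mul_le_of_le_one_left hC h_inner
    rw [Nat.cast_succ]
    exact ⟨_, by positivity, h_pow.add_one hC (by positivity) h_lie_pow,
      fun v hv => (h_log v hv).add_one hC (by positivity) fun w hw => h_lie_log v w hv hw⟩

lemma exists_sobolevBounded_natCast_bracketMul_mul_I (k : ℕ) :
    ∃ C, 0 ≤ C ∧ ∀ τ : ℝ, SobolevBounded k (C * (1 + |τ|) ^ k)
      (bracketMul (E := E) (F := F) (τ * Complex.I)) := by
  induction k with
  | zero =>
    rw [Nat.cast_zero]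
    refine ⟨1, zero_le_one, fun τ => ?_⟩
    refine sobolevBounded_zero_smulLeftCLM (hasTemperateGrowth_bracketPow _) fun x => ?_
    simp
  | succ k ih =>
    obtain ⟨C, hC, h_pow⟩ := ih
    obtain ⟨B, hB, -, h_log⟩ :=
      exists_sobolevBounded_bracketMul_neg_two_and_logDerivBracketMul (E := E) (F := F) k
    refine ⟨C + Module.finrank ℝ E * (B * C + 2 * Real.pi * C), by positivity, fun τ => ?_⟩
    have h_lie (v : E) (hv : ‖v‖ = 1) : SobolevBounded k (|τ| * (B * (C * (1 + |τ|) ^ k)))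
        ⁅lineDerivOpCLM ℂ 𝓢(E, F) v, bracketMul (E := E) (F := F) (τ * Complex.I)⁆ := by
      rw [lie_lineDeriv_bracketMul]
      simpa using ((h_log v hv).comp (h_pow τ) hB).smul (τ * Complex.I)
    rw [Nat.cast_succ]
    refine ((h_pow τ).add_one (by positivity) (by positivity) h_lie).mono ?_
    have h₀ : (1 + |τ|) ^ k ≤ (1 + |τ|) ^ (k + 1) :=
      pow_le_pow_right₀ (by linarith [abs_nonneg τ]) k.le_succ
    have h₁ : |τ| * (1 + |τ|) ^ k ≤ (1 + |τ|) ^ (k + 1) := by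
      rw [pow_succ']
      gcongr
      linarith
    calc C * (1 + |τ|) ^ k + Module.finrank ℝ E *
          (|τ| * (B * (C * (1 + |τ|) ^ k)) + 2 * Real.pi * (C * (1 + |τ|) ^ k))
        = C * (1 + |τ|) ^ k + Module.finrank ℝ E *
          (B * C * (|τ| * (1 + |τ|) ^ k) + 2 * Real.pi * C * (1 + |τ|) ^ k) := by ring
      _ ≤ C * (1 + |τ|) ^ (k + 1) + Module.finrank ℝ E *
          (B * C * (1 + |τ|) ^ (k + 1) + 2 * Real.pi * C * (1 + |τ|) ^ (k + 1)) := by gcongr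
      _ = _ := by ring

end SobolevBounded

section Interpolation

omit [FiniteDimensional ℝ E] [MeasurableSpace E] [BorelSpace E] in
lemma hasTemperateGrowth_div_one_add_norm_sq_add {s : ℝ} (hs : 0 < s) :
    (fun x : E => s / (1 + ‖x‖ ^ 2 + s)).HasTemperateGrowth := by
  have h_scale : ((√(1 + s))⁻¹) ^ 2 = (1 + s)⁻¹ := by
    rw [inv_pow, Real.sq_sqrt (by positivity)]
  have h_eq : (fun x : E => s / (1 + ‖x‖ ^ 2 + s)) = (fun _ => s * (1 + s)⁻¹) *
      (fun x : E => (1 + ‖x‖ ^ 2) ^ (-1 : ℝ)) ∘ ((√(1 + s))⁻¹ • ContinuousLinearMap.id ℝ E) := by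
    ext x
    simp only [Pi.mul_apply, Function.comp, smul_apply, ContinuousLinearMap.id_apply, norm_smul,
      mul_pow, Real.norm_eq_abs, sq_abs, h_scale, Real.rpow_neg_one]
    have : 0 < 1 + ‖x‖ ^ 2 + s := by positivity
    field_simp
    ring
  rw [h_eq]
  exact (Function.HasTemperateGrowth.const _).mul
    ((Function.hasTemperateGrowth_one_add_norm_sq_rpow E (-1)).comp
      (ContinuousLinearMap.hasTemperateGrowth _))

omit [InnerProductSpace ℂ F] in
lemma enorm_sq_eq_ofReal (y : F) : ‖y‖ₑ ^ 2 = ENNReal.ofReal (‖y‖ ^ 2) := by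
  rw [ENNReal.ofReal_pow (norm_nonneg y), ofReal_norm]

variable [CompleteSpace F]

lemma sobolevNorm_besselPot (a : ℝ) (w : ℂ) (f : 𝓢(E, F)) :
    sobolevNorm a (besselPot w f) = sobolevNorm (a + w.re) f := by
  rw [sobolevNorm, besselPot_besselPot, norm_toLp_besselPot, Complex.add_re, Complex.ofReal_re]

lemma sobolevBounded_add_iff {a s C : ℝ} {T : 𝓢(E, F) →L[ℂ] 𝓢(E, F)} :
    SobolevBounded (s + a) C T ↔ SobolevBounded s C (besselPot a ∘L T ∘L besselPot (-a)) := by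
  refine ⟨fun h f => ?_, fun h f => ?_⟩
  · simpa [sobolevNorm_besselPot] using h (besselPot (-a) f)
  · simpa [sobolevNorm_besselPot, besselPot_besselPot] using h (besselPot a f)

omit [CompleteSpace F] in
@[fun_prop]
lemma measurable_enorm_fourier (f : 𝓢(E, F)) : Measurable fun ξ => ‖𝓕 f ξ‖ₑ :=
  (𝓕 f).continuous.enorm.measurable

omit [CompleteSpace F] in
lemma ofReal_norm_toLp_two_sq (f : 𝓢(E, F)) :
    ENNReal.ofReal (‖f.toLp 2‖ ^ 2) = ∫⁻ x, ‖f x‖ₑ ^ 2 := by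
  have h_eLpNorm := eLpNorm_nnreal_pow_eq_lintegral (μ := volume) (f := f) (p := 2) two_ne_zero
  rw [SchwartzMap.norm_toLp, ENNReal.ofReal_pow ENNReal.toReal_nonneg,
    ENNReal.ofReal_toReal (f.eLpNorm_lt_top 2 volume).ne]
  simpa using h_eLpNorm

lemma ofReal_sobolevNorm_sq (a : ℝ) (f : 𝓢(E, F)) :
    ENNReal.ofReal (sobolevNorm a f ^ 2) =
      ∫⁻ ξ, ENNReal.ofReal ((1 + ‖ξ‖ ^ 2) ^ a) * ‖𝓕 f ξ‖ₑ ^ 2 := by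
  rw [sobolevNorm, ← SchwartzMap.norm_fourier_toL2_eq, ofReal_norm_toLp_two_sq]
  refine lintegral_congr fun ξ => ?_
  rw [fourier_besselPot_apply, enorm_smul, mul_pow, enorm_sq_eq_ofReal (bracketPow _ _),
    norm_bracketPow, Complex.ofReal_re,
    ← Real.rpow_mul_natCast (one_add_norm_sq_pos ξ).le, Nat.cast_ofNat,
    div_mul_cancel₀ a two_ne_zero]

/-- The squared `K`-functional of the couple `(L ^ 2, H ^ 1)`, i.e. the infimum of
`‖g‖ ^ 2 + s⁻¹ * ‖h‖ ^ 2` (in the norms of `L ^ 2` and `H ^ 1`) over all `g + h = f`, in the form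
which diagonalizes on the Fourier side. -/
noncomputable def kFunctional (s : ℝ) (f : 𝓢(E, F)) : ℝ≥0∞ :=
  ∫⁻ ξ, ENNReal.ofReal ((1 + ‖ξ‖ ^ 2) / (1 + ‖ξ‖ ^ 2 + s)) * ‖𝓕 f ξ‖ₑ ^ 2

omit [InnerProductSpace ℂ F] [CompleteSpace F] in
-- Cauchy–Schwarz in the form `q / (q + s) * (x + y) ^ 2 ≤ x ^ 2 + q / s * y ^ 2`.
lemma ofReal_div_add_mul_enorm_add_sq_le {q s : ℝ} (hq : 0 < q) (hs : 0 < s) (y z : F) :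
    ENNReal.ofReal (q / (q + s)) * ‖y + z‖ₑ ^ 2 ≤
      ‖y‖ₑ ^ 2 + ENNReal.ofReal (s⁻¹ * q) * ‖z‖ₑ ^ 2 := by
  have h_real : q / (q + s) * ‖y + z‖ ^ 2 ≤ ‖y‖ ^ 2 + s⁻¹ * q * ‖z‖ ^ 2 := by
    calc q / (q + s) * ‖y + z‖ ^ 2 ≤ q / (q + s) * (‖y‖ + ‖z‖) ^ 2 := by
          gcongr
          exact norm_add_le y z
      _ ≤ q / (q + s) * (‖y‖ + ‖z‖) ^ 2 + (s * ‖y‖ - q * ‖z‖) ^ 2 / (s * (q + s)) :=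
          le_add_of_nonneg_right (by positivity)
      _ = ‖y‖ ^ 2 + s⁻¹ * q * ‖z‖ ^ 2 := by
          field_simp
          ring
  rw [enorm_sq_eq_ofReal, enorm_sq_eq_ofReal, enorm_sq_eq_ofReal,
    ← ENNReal.ofReal_mul (by positivity),
    ← ENNReal.ofReal_mul (by positivity), ← ENNReal.ofReal_add (by positivity) (by positivity)]
  exact ENNReal.ofReal_le_ofReal h_real

lemma kFunctional_add_le {s : ℝ} (hs : 0 < s) (g h : 𝓢(E, F)) :
    kFunctional s (g + h) ≤
      ENNReal.ofReal (sobolevNorm 0 g ^ 2 + s⁻¹ * sobolevNorm 1 h ^ 2) := by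
  rw [ENNReal.ofReal_add (by positivity) (by positivity), ENNReal.ofReal_mul (by positivity),
    ofReal_sobolevNorm_sq, ofReal_sobolevNorm_sq, ← lintegral_const_mul _ (by fun_prop),
    ← lintegral_add_left (by fun_prop)]
  refine lintegral_mono fun ξ => ?_
  dsimp only
  rw [FourierTransform.fourier_add, add_apply, Real.rpow_zero, Real.rpow_one, ENNReal.ofReal_one,
    one_mul, ← mul_assoc, ← ENNReal.ofReal_mul (by positivity)]
  exact ofReal_div_add_mul_enorm_add_sq_le (one_add_norm_sq_pos ξ) hs _ _

lemma exists_add_eq_kFunctional {s : ℝ} (hs : 0 < s) (f : 𝓢(E, F)) :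
    ∃ g h, g + h = f ∧
      kFunctional s f = ENNReal.ofReal (sobolevNorm 0 g ^ 2 + s⁻¹ * sobolevNorm 1 h ^ 2) := by
  let h : 𝓢(E, F) := 𝓕⁻ (SchwartzMap.smulLeftCLM F (fun x => s / (1 + ‖x‖ ^ 2 + s)) (𝓕 f))
  have h_fourier_h (ξ : E) : 𝓕 h ξ = (s / (1 + ‖ξ‖ ^ 2 + s)) • 𝓕 f ξ := by
    rw [FourierTransform.fourier_fourierInv_eq, SchwartzMap.smulLeftCLM_apply_apply
      (hasTemperateGrowth_div_one_add_norm_sq_add hs)]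
  have h_fourier_g (ξ : E) :
      𝓕 (f - h) ξ = ((1 + ‖ξ‖ ^ 2) / (1 + ‖ξ‖ ^ 2 + s)) • 𝓕 f ξ := by
    have h_add := FourierTransform.fourier_add (f - h) h
    have h_one_sub : (1 + ‖ξ‖ ^ 2) / (1 + ‖ξ‖ ^ 2 + s) = 1 - s / (1 + ‖ξ‖ ^ 2 + s) := by
      have := one_add_norm_sq_pos ξ
      field_simp
      ring
    rw [sub_add_cancel] at h_add
    rw [h_one_sub, sub_smul, ← h_fourier_h, one_smul, h_add, add_apply, add_sub_cancel_right]
  refine ⟨f - h, h, sub_add_cancel _ _, ?_⟩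
  rw [ENNReal.ofReal_add (by positivity) (by positivity), ENNReal.ofReal_mul (by positivity),
    ofReal_sobolevNorm_sq, ofReal_sobolevNorm_sq, ← lintegral_const_mul _ (by fun_prop),
    ← lintegral_add_left (by fun_prop)]
  refine lintegral_congr fun ξ => ?_
  have := one_add_norm_sq_pos ξ
  simp only [h_fourier_g, h_fourier_h, Real.rpow_zero, Real.rpow_one, ENNReal.ofReal_one,
    one_mul, enorm_sq_eq_ofReal, norm_smul, mul_pow, Real.norm_eq_abs, sq_abs]
  rw [← ENNReal.ofReal_mul (by positivity), ← mul_assoc, ← ENNReal.ofReal_mul (by positivity),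
    ← ENNReal.ofReal_mul (by positivity), ← ENNReal.ofReal_add (by positivity) (by positivity)]
  congr 1
  field_simp

lemma lintegral_rpow_mul_kFunctional {θ : ℝ} (hθ : θ ∈ Set.Ioo 0 1) (f : 𝓢(E, F)) :
    ∫⁻ s in Set.Ioi 0, ENNReal.ofReal (s ^ (θ - 1)) * kFunctional s f =
      ENNReal.ofReal (∫ s in Set.Ioi 0, Real.rpowIntegrand₀₁ θ s 1) *
        ENNReal.ofReal (sobolevNorm θ f ^ 2) := by
  have h_inner (q : ℝ) (hq : 0 < q) :
      ∫⁻ s in Set.Ioi 0, ENNReal.ofReal (s ^ (θ - 1)) * ENNReal.ofReal (q / (q + s)) =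
        ENNReal.ofReal (∫ s in Set.Ioi 0, Real.rpowIntegrand₀₁ θ s 1) * ENNReal.ofReal (q ^ θ) := by
    have h_nonneg : ∀ᵐ s ∂volume.restrict (Set.Ioi 0), 0 ≤ Real.rpowIntegrand₀₁ θ s q := by
      filter_upwards [ae_restrict_mem measurableSet_Ioi] with s hs
      exact Real.rpowIntegrand₀₁_nonneg hθ.1 (le_of_lt hs) hq.le
    rw [← ENNReal.ofReal_mul' (by positivity), mul_comm (integral _ _),
      ← Real.integral_rpowIntegrand₀₁_eq_rpow_mul_const hθ hq.le,
      ofReal_integral_eq_lintegral_ofReal (Real.integrableOn_rpowIntegrand₀₁_Ioi hθ hq.le) h_nonneg]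
    refine setLIntegral_congr_fun measurableSet_Ioi fun s (hs : 0 < s) => ?_
    rw [← ENNReal.ofReal_mul (by positivity), Real.rpowIntegrand₀₁_eq_pow_div hθ hs.le hq.le,
      mul_div_assoc, add_comm s]
  simp_rw [ofReal_sobolevNorm_sq, kFunctional, ← lintegral_const_mul' _ _ ENNReal.ofReal_ne_top]
  rw [lintegral_lintegral_swap (by fun_prop)]
  refine lintegral_congr fun ξ => ?_
  simp_rw [← mul_assoc]
  rw [lintegral_mul_const _ (by fun_prop), h_inner _ (one_add_norm_sq_pos ξ)]

lemma SobolevBounded.interpolate_zero_one {C θ : ℝ} {T : 𝓢(E, F) →L[ℂ] 𝓢(E, F)} (hC : 0 ≤ C)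
    (hT₀ : SobolevBounded 0 C T) (hT₁ : SobolevBounded 1 C T) (hθ : θ ∈ Set.Ioo 0 1) :
    SobolevBounded θ C T := by
  intro f
  have hc : 0 < ∫ s in Set.Ioi 0, Real.rpowIntegrand₀₁ θ s 1 :=
    Real.integral_rpowIntegrand₀₁_one_pos hθ
  have h_kFunctional (s : ℝ) (hs : 0 < s) :
      kFunctional s (T f) ≤ ENNReal.ofReal (C ^ 2) * kFunctional s f := by
    obtain ⟨g, h, rfl, h_eq⟩ := exists_add_eq_kFunctional hs f
    rw [h_eq, map_add, ← ENNReal.ofReal_mul (by positivity)]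
    refine (kFunctional_add_le hs _ _).trans (ENNReal.ofReal_le_ofReal ?_)
    calc sobolevNorm 0 (T g) ^ 2 + s⁻¹ * sobolevNorm 1 (T h) ^ 2
        ≤ (C * sobolevNorm 0 g) ^ 2 + s⁻¹ * (C * sobolevNorm 1 h) ^ 2 := by
          gcongr
          · exact sobolevNorm_nonneg _ _
          · exact hT₀ g
          · exact sobolevNorm_nonneg _ _
          · exact hT₁ h
      _ = C ^ 2 * (sobolevNorm 0 g ^ 2 + s⁻¹ * sobolevNorm 1 h ^ 2) := by ring
  have h_sq : ENNReal.ofReal (sobolevNorm θ (T f) ^ 2) ≤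
      ENNReal.ofReal ((C * sobolevNorm θ f) ^ 2) := by
    rw [mul_pow, ENNReal.ofReal_mul (by positivity),
      ← ENNReal.mul_le_mul_iff_right (ENNReal.ofReal_pos.2 hc).ne' ENNReal.ofReal_ne_top,
      mul_left_comm, ← lintegral_rpow_mul_kFunctional hθ, ← lintegral_rpow_mul_kFunctional hθ,
      ← lintegral_const_mul' _ _ ENNReal.ofReal_ne_top]
    refine setLIntegral_mono' measurableSet_Ioi fun s hs => ?_
    rw [mul_left_comm]
    exact mul_le_mul_right (h_kFunctional s hs) _
  exact le_of_sq_le_sq ((ENNReal.ofReal_le_ofReal_iff (by positivity)).1 h_sq)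
    (mul_nonneg hC (sobolevNorm_nonneg θ f))

lemma SobolevBounded.interpolate {a C θ : ℝ} {T : 𝓢(E, F) →L[ℂ] 𝓢(E, F)} (hC : 0 ≤ C)
    (hT₀ : SobolevBounded a C T) (hT₁ : SobolevBounded (a + 1) C T) (hθ : θ ∈ Set.Icc 0 1) :
    SobolevBounded (a + θ) C T := by
  rcases Set.eq_endpoints_or_mem_Ioo_of_mem_Icc hθ with rfl | rfl | hθ
  · rwa [add_zero]
  · exact hT₁
  · rw [add_comm, sobolevBounded_add_iff]
    refine .interpolate_zero_one hC ?_ ?_ hθ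
    · rwa [← sobolevBounded_add_iff, zero_add]
    · rwa [← sobolevBounded_add_iff, add_comm]

lemma exists_sobolevBounded_bracketMul_mul_I {a : ℝ} (ha : 0 ≤ a) :
    ∃ (C : ℝ) (N : ℕ), 0 ≤ C ∧ ∀ τ : ℝ, SobolevBounded a (C * (1 + |τ|) ^ N)
      (bracketMul (E := E) (F := F) (τ * Complex.I)) := by
  obtain ⟨C₀, hC₀, h₀⟩ := exists_sobolevBounded_natCast_bracketMul_mul_I (E := E) (F := F) ⌊a⌋₊
  obtain ⟨C₁, -, h₁⟩ :=
    exists_sobolevBounded_natCast_bracketMul_mul_I (E := E) (F := F) (⌊a⌋₊ + 1)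
  refine ⟨max C₀ C₁, ⌊a⌋₊ + 1, le_max_of_le_left hC₀, fun τ => ?_⟩
  have h_one_le : 1 ≤ 1 + |τ| := by simp
  have h_fract : a - ⌊a⌋₊ ∈ Set.Icc (0 : ℝ) 1 :=
    ⟨sub_nonneg.2 (Nat.floor_le ha), by linarith [Nat.lt_floor_add_one a]⟩
  have h_bounded := SobolevBounded.interpolate (T := bracketMul (E := E) (F := F) (τ * Complex.I))
    (C := max C₀ C₁ * (1 + |τ|) ^ (⌊a⌋₊ + 1)) (by positivity) ((h₀ τ).mono ?_) ?_ h_fract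
  · rwa [add_sub_cancel] at h_bounded
  · gcongr
    · exact le_max_left _ _
    · exact Nat.le_succ _
  · rw [← Nat.cast_succ]
    refine (h₁ τ).mono ?_
    gcongr
    exact le_max_right _ _

end Interpolation

section ExponentialIntegral

variable {P H : Type*} [NormedAddCommGroup H] [NormedSpace ℂ H] [MeasurableSpace P]
  {ν : Measure P} {φ : P → ℝ} {k : P → H}

omit [MeasurableSpace P] in
lemma norm_cexp_mul_smul (z : ℂ) (p : P) :
    ‖Complex.exp (z * φ p) • k p‖ = Real.exp (z.re * φ p) * ‖k p‖ := by
  rw [norm_smul, Complex.norm_exp, Complex.re_mul_ofReal]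

lemma aestronglyMeasurable_cexp_mul_smul (hφ : Measurable φ) (hk : AEStronglyMeasurable k ν)
    (z : ℂ) : AEStronglyMeasurable (fun p => Complex.exp (z * φ p) • k p) ν :=
  (by fun_prop : Measurable fun p => Complex.exp (z * φ p)).aestronglyMeasurable.smul hk

lemma integrable_cexp_mul_smul (hφ : Measurable φ) (hk : AEStronglyMeasurable k ν) {z : ℂ}
    (h : Integrable (fun p => Real.exp (z.re * φ p) * ‖k p‖) ν) :
    Integrable (fun p => Complex.exp (z * φ p) • k p) ν :=
  h.mono' (aestronglyMeasurable_cexp_mul_smul hφ hk z)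
    (.of_forall fun p => (norm_cexp_mul_smul z p).le)

lemma norm_integral_cexp_mul_smul_le {α β : ℝ}
    (hα : Integrable (fun p => Real.exp (α * φ p) * ‖k p‖) ν)
    (hβ : Integrable (fun p => Real.exp (β * φ p) * ‖k p‖) ν) {z : ℂ} (hz : z.re ∈ Set.Icc α β) :
    ‖∫ p, Complex.exp (z * φ p) • k p ∂ν‖ ≤
      ∫ p, Real.exp (α * φ p) * ‖k p‖ + Real.exp (β * φ p) * ‖k p‖ ∂ν := by
  refine norm_integral_le_of_norm_le (hα.add hβ) (.of_forall fun p => ?_)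
  have h_exp : Real.exp (z.re * φ p) ≤ Real.exp (α * φ p) + Real.exp (β * φ p) := by
    rcases le_total 0 (φ p) with hp | hp
    · refine (Real.exp_le_exp.2 ?_).trans (le_add_of_nonneg_left (Real.exp_pos _).le)
      exact mul_le_mul_of_nonneg_right hz.2 hp
    · refine (Real.exp_le_exp.2 ?_).trans (le_add_of_nonneg_right (Real.exp_pos _).le)
      exact mul_le_mul_of_nonpos_right hz.1 hp
  rw [norm_cexp_mul_smul, ← add_mul]
  gcongr

lemma abs_mul_exp_mul_le {x y t : ℝ} (h : |y - x| ≤ 1) :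
    |t| * Real.exp (y * t) ≤ Real.exp ((x + 2) * t) + Real.exp ((x - 2) * t) := by
  have h_exponent : y * t ≤ x * t + |t| := by
    have h_abs : (y - x) * t ≤ |t| :=
      (le_abs_self _).trans ((abs_mul _ _).trans_le (mul_le_of_le_one_left (abs_nonneg t) h))
    linarith
  have h_abs_le : |t| ≤ Real.exp |t| := by linarith [Real.add_one_le_exp |t|]
  calc |t| * Real.exp (y * t) ≤ Real.exp |t| * Real.exp (x * t + |t|) := by gcongr
    _ = Real.exp (x * t) * Real.exp |2 * t| := by
      rw [← Real.exp_add, ← Real.exp_add, abs_mul, abs_two]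
      ring_nf
    _ ≤ Real.exp (x * t) * (Real.exp (2 * t) + Real.exp (-(2 * t))) := by
      gcongr
      exact Real.exp_abs_le _
    _ = Real.exp ((x + 2) * t) + Real.exp ((x - 2) * t) := by
      rw [mul_add, ← Real.exp_add, ← Real.exp_add]
      ring_nf

lemma differentiable_integral_cexp_mul_smul (hφ : Measurable φ) (hk : AEStronglyMeasurable k ν)
    (h : ∀ c : ℝ, Integrable (fun p => Real.exp (c * φ p) * ‖k p‖) ν) :
    Differentiable ℂ fun z : ℂ => ∫ p, Complex.exp (z * φ p) • k p ∂ν := by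
  intro z
  refine (hasDerivAt_integral_of_dominated_loc_of_deriv_le (Metric.ball_mem_nhds z one_pos)
    (.of_forall fun w => aestronglyMeasurable_cexp_mul_smul hφ hk w)
    (integrable_cexp_mul_smul hφ hk (h z.re))
    (F' := fun w p => (Complex.exp (w * φ p) * φ p) • k p)
    (bound := fun p => Real.exp ((z.re + 2) * φ p) * ‖k p‖ + Real.exp ((z.re - 2) * φ p) * ‖k p‖)
    ?_ (.of_forall fun p w hw => ?_) ((h _).add (h _))
    (.of_forall fun p w _ => ?_)).2.differentiableAt
  · exact (by fun_prop :
      Measurable fun p => Complex.exp (z * φ p) * φ p).aestronglyMeasurable.smul hk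
  · have h_re : |w.re - z.re| ≤ 1 := by
      rw [← Complex.sub_re]
      exact (Complex.abs_re_le_norm _).trans (mem_ball_iff_norm.1 hw).le
    rw [norm_smul, norm_mul, Complex.norm_exp, Complex.re_mul_ofReal, Complex.norm_real,
      Real.norm_eq_abs, ← add_mul, mul_comm (Real.exp _)]
    exact mul_le_mul_of_nonneg_right (abs_mul_exp_mul_le h_re) (norm_nonneg _)
  · simpa using ((hasDerivAt_id w).mul_const (φ p : ℂ)).cexp.smul_const (k p)

end ExponentialIntegral

section ThreeLines

/-- The analytic family `T_z f = J ^ (z * a) (⟨x⟩ ^ ((1 - z) * b) f)` of Stein interpolation. -/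
noncomputable def steinFamily (a b : ℝ) (f : 𝓢(E, F)) (z : ℂ) : 𝓢(E, F) :=
  besselPot (z * a) (bracketMul ((1 - z) * b) f)

/-- The exponent `φ` for which the matrix coefficients of `steinFamily` are superpositions of
the functions `z ↦ exp (z * φ (ξ, x))`. -/
noncomputable def steinPhase (a b : ℝ) (p : E × E) : ℝ :=
  a * (Real.log (1 + ‖p.1‖ ^ 2) / 2) - b * (Real.log (1 + ‖p.2‖ ^ 2) / 2)

/-- The density, in the frequency `ξ` and the position `x`, of the pairing of `v` with `𝓕 h`. -/
noncomputable def fourierPairing (v h : 𝓢(E, F)) (p : E × E) : ℂ :=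
  ⟪v p.1, Real.fourierChar (-⟪p.2, p.1⟫_ℝ) • h p.2⟫_ℂ

omit [InnerProductSpace ℝ E] [FiniteDimensional ℝ E] in
@[fun_prop]
lemma measurable_steinPhase (a b : ℝ) : Measurable (steinPhase (E := E) a b) := by
  unfold steinPhase
  fun_prop

omit [FiniteDimensional ℝ E] [MeasurableSpace E] [BorelSpace E] in
lemma continuous_fourierPairing (v h : 𝓢(E, F)) : Continuous (fourierPairing v h) := by
  have h_v := v.continuous
  have h_h := h.continuous
  have := Real.continuous_fourierChar
  unfold fourierPairing
  fun_prop

omit [InnerProductSpace ℝ E] [FiniteDimensional ℝ E] [MeasurableSpace E] [BorelSpace E] in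
lemma cexp_mul_steinPhase (a b : ℝ) (z : ℂ) (ξ x : E) :
    Complex.exp (z * steinPhase a b (ξ, x)) = bracketPow (z * a) ξ * bracketPow (-z * b) x := by
  rw [bracketPow_eq_exp, bracketPow_eq_exp, ← Complex.exp_add, steinPhase]
  push_cast
  ring_nf

lemma integrable_exp_steinPhase_mul_norm_fourierPairing (a b c : ℝ) (v h : 𝓢(E, F)) :
    Integrable fun p => Real.exp (c * steinPhase a b p) * ‖fourierPairing v h p‖ := by
  refine ((bracketMul (c * a) v).integrable (μ := volume)).norm.mul_prod
    ((bracketMul (-c * b) h).integrable (μ := volume)).norm |>.mono' ?_ (.of_forall fun p => ?_)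
  · exact (by fun_prop : Measurable fun p : E × E =>
      Real.exp (c * steinPhase a b p)).aestronglyMeasurable.mul
      (continuous_fourierPairing v h).norm.aestronglyMeasurable
  · have h_exp : Real.exp (c * steinPhase a b p) =
        ‖bracketPow (c * a) p.1‖ * ‖bracketPow (-c * b) p.2‖ := by
      rw [← norm_mul, ← cexp_mul_steinPhase, Complex.norm_exp, Complex.re_mul_ofReal,
        Complex.ofReal_re]
    have h_norm : ‖fourierPairing v h p‖ ≤ ‖v p.1‖ * ‖h p.2‖ := by
      refine (norm_inner_le_norm _ _).trans_eq ?_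
      rw [Circle.norm_smul]
    rw [Real.norm_of_nonneg (by positivity), h_exp, bracketMul_apply, bracketMul_apply, norm_smul,
      norm_smul, mul_mul_mul_comm]
    gcongr

variable [CompleteSpace F]

lemma inner_toLp_steinFamily (a b : ℝ) (v f : 𝓢(E, F)) (z : ℂ) :
    ⟪v.toLp 2, (steinFamily a b f z).toLp 2⟫_ℂ = ∫ p, Complex.exp (z * steinPhase a b p) •
      fourierPairing (𝓕 v) (bracketMul b f) p := by
  have h_integrable := integrable_cexp_mul_smul (measurable_steinPhase a b)
    (continuous_fourierPairing (𝓕 v) (bracketMul b f)).aestronglyMeasurable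
    (integrable_exp_steinPhase_mul_norm_fourierPairing a b z.re (𝓕 v) (bracketMul b f))
  have h_weight (x : E) : bracketPow ((1 - z) * b) x = bracketPow (-z * b) x * bracketPow b x := by
    rw [← bracketPow_add]
    ring_nf
  rw [← SchwartzMap.inner_fourier_toL2_eq, SchwartzMap.inner_toL2_toL2_eq _ _ volume,
    Measure.volume_eq_prod, integral_prod _ h_integrable]
  congr with ξ
  rw [steinFamily, fourier_besselPot_apply, SchwartzMap.fourier_coe (bracketMul _ f),
    Real.fourier_eq, ← integral_smul, ← integral_inner]
  · congr with x
    simp only [fourierPairing, bracketMul_apply, h_weight, cexp_mul_steinPhase, Circle.smul_def,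
      inner_smul_right, smul_eq_mul]
    ring
  · exact ((Real.fourierIntegral_convergent_iff ξ).2 (SchwartzMap.integrable _)).smul _

lemma norm_cexp_sq (z : ℂ) : ‖Complex.exp (z ^ 2)‖ = Real.exp (z.re ^ 2 - z.im ^ 2) := by
  rw [Complex.norm_exp, sq, Complex.mul_re, sq, sq]

open Complex.HadamardThreeLines in
-- The three lines theorem for the scalar function `exp (z ^ 2) * ⟪u θ, u z⟫`.
lemma norm_le_rpow_mul_rpow_of_diffContOnCl_inner {H : Type*} [NormedAddCommGroup H]
    [InnerProductSpace ℂ H] {u : ℂ → H} {θ A B : ℝ} (hθ : θ ∈ Set.Icc 0 1)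
    (hd : DiffContOnCl ℂ (fun z => ⟪u θ, u z⟫_ℂ) (verticalStrip 0 1))
    (hbdd : BddAbove ((fun z => ‖⟪u θ, u z⟫_ℂ‖) '' verticalClosedStrip 0 1))
    (h₀ : ∀ z : ℂ, z.re = 0 → ‖Complex.exp (z ^ 2)‖ * ‖u z‖ ≤ A)
    (h₁ : ∀ z : ℂ, z.re = 1 → ‖Complex.exp (z ^ 2)‖ * ‖u z‖ ≤ B) :
    ‖u θ‖ ≤ A ^ (1 - θ) * B ^ θ := by
  have hA : 0 ≤ A := (mul_nonneg (norm_nonneg _) (norm_nonneg _)).trans (h₀ 0 rfl)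
  have hB : 0 ≤ B := (mul_nonneg (norm_nonneg _) (norm_nonneg _)).trans (h₁ 1 rfl)
  let G : ℂ → ℂ := fun z => Complex.exp (z ^ 2) * ⟪u θ, u z⟫_ℂ
  have h_norm (z : ℂ) : ‖G z‖ ≤ ‖u θ‖ * (‖Complex.exp (z ^ 2)‖ * ‖u z‖) := by
    rw [norm_mul, mul_left_comm]
    gcongr
    exact norm_inner_le_norm _ _
  have h_diff : DiffContOnCl ℂ G (verticalStrip 0 1) :=
    (by fun_prop : Differentiable ℂ fun z : ℂ => Complex.exp (z ^ 2)).diffContOnCl.smul hd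
  have h_bdd : BddAbove (norm ∘ G '' verticalClosedStrip 0 1) := by
    obtain ⟨M, hM⟩ := hbdd
    refine ⟨Real.exp 1 * M, ?_⟩
    rintro _ ⟨z, hz, rfl⟩
    simp only [Function.comp_apply, G, norm_mul, norm_cexp_sq]
    gcongr
    · nlinarith [hz.1, hz.2, sq_nonneg z.im]
    · exact hM ⟨z, hz, rfl⟩
  have h_sq : ‖u θ‖ * ‖u θ‖ ≤ ‖G θ‖ := by
    rw [norm_mul, norm_cexp_sq, inner_self_eq_norm_sq_to_K, norm_pow, RCLike.norm_ofReal, abs_norm,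
      ← sq]
    exact le_mul_of_one_le_left (sq_nonneg _) (Real.one_le_exp (by simp [sq_nonneg]))
  have h_interp := norm_le_interp_of_mem_verticalClosedStrip₀₁' G (z := θ) hθ h_diff h_bdd
    (fun z hz => (h_norm z).trans (mul_le_mul_of_nonneg_left (h₀ z hz) (norm_nonneg _)))
    (fun z hz => (h_norm z).trans (mul_le_mul_of_nonneg_left (h₁ z hz) (norm_nonneg _)))
  rcases (norm_nonneg (u θ)).eq_or_lt with hu | hu
  · rw [← hu]
    positivity
  · refine le_of_mul_le_mul_left (h_sq.trans (h_interp.trans_eq ?_)) hu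
    rw [Complex.ofReal_re, Real.mul_rpow hu.le hA, Real.mul_rpow hu.le hB, mul_mul_mul_comm,
      ← Real.rpow_add hu, sub_add_cancel, Real.rpow_one]

end ThreeLines

section WeightedInterpolation

variable [CompleteSpace F]

lemma differentiable_inner_toLp_steinFamily (a b : ℝ) (v f : 𝓢(E, F)) :
    Differentiable ℂ fun z => ⟪v.toLp 2, (steinFamily a b f z).toLp 2⟫_ℂ := by
  simp only [inner_toLp_steinFamily]
  exact differentiable_integral_cexp_mul_smul (measurable_steinPhase a b)
    (continuous_fourierPairing _ _).aestronglyMeasurable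
    fun c => integrable_exp_steinPhase_mul_norm_fourierPairing a b c _ _

lemma bddAbove_norm_inner_toLp_steinFamily (a b α β : ℝ) (v f : 𝓢(E, F)) :
    BddAbove ((fun z => ‖⟪v.toLp 2, (steinFamily a b f z).toLp 2⟫_ℂ‖) ''
      Complex.HadamardThreeLines.verticalClosedStrip α β) := by
  refine ⟨∫ p, Real.exp (α * steinPhase a b p) * ‖fourierPairing (𝓕 v) (bracketMul b f) p‖ +
    Real.exp (β * steinPhase a b p) * ‖fourierPairing (𝓕 v) (bracketMul b f) p‖, ?_⟩
  rintro _ ⟨z, hz, rfl⟩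
  dsimp only
  rw [inner_toLp_steinFamily]
  exact norm_integral_cexp_mul_smul_le
    (integrable_exp_steinPhase_mul_norm_fourierPairing a b α _ _)
    (integrable_exp_steinPhase_mul_norm_fourierPairing a b β _ _) hz

lemma norm_toLp_steinFamily (a b : ℝ) (f : 𝓢(E, F)) (z : ℂ) :
    ‖(steinFamily a b f z).toLp 2‖ = sobolevNorm (z.re * a) (bracketMul ((1 - z) * b) f) := by
  rw [steinFamily, norm_toLp_besselPot, Complex.re_mul_ofReal]

omit [CompleteSpace F] in
lemma norm_toLp_bracketMul_le {w w' : ℂ} (h : w.re ≤ w'.re) (f : 𝓢(E, F)) :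
    ‖(bracketMul w f).toLp 2‖ ≤ ‖(bracketMul w' f).toLp 2‖ := by
  rw [← one_mul (norm (SchwartzMap.toLp (bracketMul w' f) _ _))]
  refine norm_toLp_two_le fun x => ?_
  rw [bracketMul_apply, bracketMul_apply, norm_smul, norm_smul, norm_bracketPow, norm_bracketPow,
    one_mul]
  gcongr
  simp

lemma norm_toLp_steinFamily_le_of_re_eq_zero (a b : ℝ) (f : 𝓢(E, F)) {z : ℂ} (hz : z.re = 0) :
    ‖(steinFamily a b f z).toLp 2‖ ≤ ‖(bracketMul b f).toLp 2‖ := by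
  rw [norm_toLp_steinFamily, hz, zero_mul, sobolevNorm_zero]
  exact norm_toLp_bracketMul_le (by simp [hz]) f

lemma exp_one_sub_sq_mul_one_add_abs_mul_pow_le (b τ : ℝ) (N : ℕ) :
    Real.exp (1 - τ ^ 2) * (1 + |τ * b|) ^ N ≤ Real.exp (1 + (N * b) ^ 2) := by
  have h_pow : (1 + |τ * b|) ^ N ≤ Real.exp (N * |τ * b|) := by
    rw [Real.exp_nat_mul, add_comm]
    gcongr
    exact Real.add_one_le_exp _
  refine (mul_le_mul_of_nonneg_left h_pow (Real.exp_pos _).le).trans ?_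
  rw [← Real.exp_add, Real.exp_le_exp, abs_mul]
  have h_sq_b : (N * b) ^ 2 = (N * |b|) ^ 2 := by rw [mul_pow, mul_pow, sq_abs]
  nlinarith [sq_nonneg (N * |b| - |τ|), sq_abs τ, sq_nonneg (N * |b|), sq_nonneg τ]

lemma exists_norm_cexp_sq_mul_norm_toLp_steinFamily_le {a : ℝ} (ha : 0 ≤ a) (b : ℝ) :
    ∃ C, 1 ≤ C ∧ ∀ (f : 𝓢(E, F)) (z : ℂ), z.re = 1 →
      ‖Complex.exp (z ^ 2)‖ * ‖(steinFamily a b f z).toLp 2‖ ≤ C * sobolevNorm a f := by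
  obtain ⟨C, N, hC, h_bounded⟩ := exists_sobolevBounded_bracketMul_mul_I (E := E) (F := F) ha
  refine ⟨1 + C * Real.exp (1 + (N * -b) ^ 2), le_add_of_nonneg_right (by positivity),
    fun f z hz => ?_⟩
  have h_exponent : (1 - z) * b = (z.im * -b : ℝ) * Complex.I := by
    apply Complex.ext <;> simp [hz]
  rw [norm_toLp_steinFamily, norm_cexp_sq, hz, one_mul, one_pow, h_exponent]
  calc Real.exp (1 - z.im ^ 2) * sobolevNorm a (bracketMul ((z.im * -b : ℝ) * Complex.I) f)
      ≤ Real.exp (1 - z.im ^ 2) * (C * (1 + |z.im * -b|) ^ N * sobolevNorm a f) := by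
        gcongr
        exact h_bounded _ f
    _ = C * (Real.exp (1 - z.im ^ 2) * (1 + |z.im * -b|) ^ N) * sobolevNorm a f := by ring
    _ ≤ C * Real.exp (1 + (N * -b) ^ 2) * sobolevNorm a f := by
        gcongr
        · exact sobolevNorm_nonneg _ _
        · exact exp_one_sub_sq_mul_one_add_abs_mul_pow_le _ _ _
    _ ≤ (1 + C * Real.exp (1 + (N * -b) ^ 2)) * sobolevNorm a f := by
        gcongr
        · exact sobolevNorm_nonneg _ _
        · exact le_add_of_nonneg_left zero_le_one

lemma exists_sobolevNorm_bracketMul_le {a : ℝ} (ha : 0 ≤ a) (b : ℝ) :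
    ∃ C, 0 < C ∧ ∀ θ ∈ Set.Icc (0 : ℝ) 1, ∀ f : 𝓢(E, F),
      sobolevNorm (θ * a) (bracketMul ((1 - θ) * b : ℝ) f) ≤
        C * ‖(bracketMul b f).toLp 2‖ ^ (1 - θ) * sobolevNorm a f ^ θ := by
  obtain ⟨C, hC, h_right⟩ :=
    exists_norm_cexp_sq_mul_norm_toLp_steinFamily_le (E := E) (F := F) ha b
  have hC_pos : 0 < C := one_pos.trans_le hC
  refine ⟨C, hC_pos, fun θ hθ f => ?_⟩
  have h_left (z : ℂ) (hz : z.re = 0) :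
      ‖Complex.exp (z ^ 2)‖ * ‖(steinFamily a b f z).toLp 2‖ ≤ ‖(bracketMul b f).toLp 2‖ := by
    refine (mul_le_of_le_one_left (norm_nonneg _) ?_).trans
      (norm_toLp_steinFamily_le_of_re_eq_zero a b f hz)
    simp [norm_cexp_sq, hz, sq_nonneg]
  have h_interp := norm_le_rpow_mul_rpow_of_diffContOnCl_inner
    (u := fun z => (steinFamily a b f z).toLp 2) hθ
    (differentiable_inner_toLp_steinFamily a b _ f).diffContOnCl
    (bddAbove_norm_inner_toLp_steinFamily a b 0 1 _ f) h_left (h_right f)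
  have h_nonneg := sobolevNorm_nonneg a f
  have h_rpow_le : C ^ θ ≤ C := Real.rpow_le_self_of_one_le hC hθ.2
  rw [norm_toLp_steinFamily, Complex.ofReal_re, Real.mul_rpow hC_pos.le h_nonneg] at h_interp
  push_cast
  refine h_interp.trans ?_
  rw [mul_left_comm, mul_assoc]
  gcongr

omit [FiniteDimensional ℝ E] [MeasurableSpace E] [BorelSpace E] [CompleteSpace F] in
lemma coe_bracketMul_ofReal (s : ℝ) (f : 𝓢(E, F)) :
    ⇑(bracketMul s f) = fun x => ((1 + ‖x‖ ^ 2) ^ (s / 2) : ℝ) • f x := by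
  ext x
  rw [bracketMul_apply, bracketPow_ofReal, Complex.coe_smul]

omit [CompleteSpace F] in
lemma coe_besselPot_ofReal (s : ℝ) (f : 𝓢(E, F)) :
    ⇑(besselPot s f) = 𝓕⁻ (fun ξ => ((1 + ‖ξ‖ ^ 2) ^ (s / 2) : ℝ) • 𝓕 (f : E → F) ξ) := by
  rw [besselPot, SchwartzMap.fourierMultiplierCLM_apply, ← bracketMul, SchwartzMap.fourierInv_coe,
    coe_bracketMul_ofReal, SchwartzMap.fourier_coe]

omit [CompleteSpace F] in
lemma eLpNorm_two_eq_ofReal_norm_toLp (f : 𝓢(E, F)) :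
    eLpNorm f 2 volume = ENNReal.ofReal ‖f.toLp 2‖ := by
  rw [SchwartzMap.norm_toLp, ENNReal.ofReal_toReal (f.eLpNorm_lt_top 2 volume).ne]

end WeightedInterpolation

theorem stmt_12_general {E F : Type*} [NormedAddCommGroup E] [InnerProductSpace ℝ E]
    [FiniteDimensional ℝ E] [MeasurableSpace E] [BorelSpace E] [NormedAddCommGroup F]
    [InnerProductSpace ℂ F] [CompleteSpace F] {a : ℝ} (ha : 0 ≤ a) (b : ℝ) :
    ∃ C : ℝ, 0 < C ∧ ∀ θ ∈ Set.Icc (0 : ℝ) 1, ∀ f : 𝓢(E, F),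
      eLpNorm (𝓕⁻ fun ξ => ((1 + ‖ξ‖ ^ 2) ^ (θ * a / 2) : ℝ) •
          𝓕 (fun x => ((1 + ‖x‖ ^ 2) ^ ((1 - θ) * b / 2) : ℝ) • f x) ξ) 2 volume
        ≤ ENNReal.ofReal C *
          eLpNorm (fun x => ((1 + ‖x‖ ^ 2) ^ (b / 2) : ℝ) • f x) 2 volume ^ (1 - θ) *
          eLpNorm (𝓕⁻ fun ξ => ((1 + ‖ξ‖ ^ 2) ^ (a / 2) : ℝ) • 𝓕 (f : E → F) ξ) 2 volume ^ θ := by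
  obtain ⟨C, hC, h⟩ := exists_sobolevNorm_bracketMul_le (E := E) (F := F) ha b
  refine ⟨C, hC, fun θ hθ f => ?_⟩
  have h_pow_nonneg : 0 ≤ ‖(bracketMul b f).toLp 2‖ ^ (1 - θ) := by positivity
  rw [← coe_bracketMul_ofReal, ← coe_bracketMul_ofReal, ← coe_besselPot_ofReal,
    ← coe_besselPot_ofReal, eLpNorm_two_eq_ofReal_norm_toLp, eLpNorm_two_eq_ofReal_norm_toLp,
    eLpNorm_two_eq_ofReal_norm_toLp,
    ENNReal.ofReal_rpow_of_nonneg (norm_nonneg _) (sub_nonneg.2 hθ.2),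
    ENNReal.ofReal_rpow_of_nonneg (norm_nonneg _) hθ.1, ← ENNReal.ofReal_mul hC.le,
    ← ENNReal.ofReal_mul (mul_nonneg hC.le h_pow_nonneg)]
  exact ENNReal.ofReal_le_ofReal (h θ hθ f)

/-- Weighted interpolation inequality:
‖J^{θa}(⟨x⟩^{(1−θ)b} f)‖_{L²} ≤ C ‖⟨x⟩^{b} f‖_{L²}^{1−θ} ‖J^{a} f‖_{L²}^{θ}
for a, b > 0, θ ∈ (0,1) and Schwartz f, with ⟨x⟩ = (1+|x|²)^{1/2}. -/
theorem stmt_12 (n : ℕ) (a b θ : ℝ) (ha : 0 < a) (hb : 0 < b)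
    (hθ : θ ∈ Set.Ioo (0 : ℝ) 1) :
    ∃ C : ℝ, 0 < C ∧ ∀ f : SchwartzMap (EuclideanSpace ℝ (Fin n)) ℂ,
      eLpNorm (Jpot (θ * a)
          (fun x => ((1 + ‖x‖ ^ 2) ^ ((1 - θ) * b / 2) : ℝ) • f x)) 2 volume
        ≤ ENNReal.ofReal C *
          eLpNorm (fun x => ((1 + ‖x‖ ^ 2) ^ (b / 2) : ℝ) • f x) 2 volume ^ (1 - θ) *
          eLpNorm (Jpot a (⇑f)) 2 volume ^ θ := by
  obtain ⟨C, hC, h⟩ := stmt_12_general (E := EuclideanSpace ℝ (Fin n)) (F := ℂ) ha.le b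
  exact ⟨C, hC, h θ (Set.Ioo_subset_Icc_self hθ)⟩
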